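/- A convex body K in ℂⁿ (n ≥ 2) is a complex ellipsoid if and only if for every complex line L, the intersection L ∩ K is either empty, a single point, or a closed disk. -/

import Mathlib

def IsConvexBody {n : ℕ} (K : Set (EuclideanSpace ℂ (Fin n))) : Prop :=
  IsCompact K ∧ Convex ℝ K ∧ (interior K).Nonempty

/-- A complex ellipsoid: the image of the closed unit ball under an
invertible ℂ-affine transformation. -/
def IsComplexEllipsoid {n : ℕ} (K : Set (EuclideanSpace ℂ (Fin n))) : Prop :=
  ∃ (L : EuclideanSpace ℂ (Fin n) ≃ₗ[ℂ] EuclideanSpace ℂ (Fin n))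
    (b : EuclideanSpace ℂ (Fin n)),
    K = (fun x => L x + b) '' Metric.closedBall 0 1

/-! Translate a point of `K` farthest from the origin to `0`. Then `K` touches a real hyperplane
`re w = 0` at `0` only, where `w` is complex linear. For `w x = 1`, the complex line through `0` and
`x` meets `K` in a disk tangent to that hyperplane, with diameter from `0` to `ρ x • x` for some
`ρ x ≥ 0`.

The projective map `x ↦ (x / w x, 1 / w x)` takes complex lines to complex lines, and inversion
takes disks missing `0` to disks. It turns `K` into the region `1 ≤ ρ x * re z`, whose sections by
the complex lines `z = m * t + k`, with `m ≠ 0` and `x` moving along a line with parameter `t`, are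
therefore disks again. Taking `k = 1 / ρ x` at a maximum of `ρ`, these disks are tangent at one
point, and they can agree where they overlap only if `1 / ρ` is `a * ‖t‖ ^ 2` plus a constant. So on
every line `1 / ρ` is a positive multiple of a squared distance plus a constant, which by the
Jordan-von Neumann theorem makes it the sum of a constant `c` and a Hermitian norm squared.
Back in the original coordinates, `K` is `c * ‖z‖ ^ 2 + ‖v‖ ^ 2 ≤ re z`, and completing the square
shows that this is an ellipsoid.
-/

section ClosedBalls

open Metric
open scoped RealInnerProductSpace ComplexConjugate Pointwise

/-- The set `s` is a closed ball. Negative radii are allowed, so that in `ℂ` the closed balls are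
exactly the empty set, the points and the closed disks. -/
def IsClosedBall {α : Type*} [PseudoMetricSpace α] (s : Set α) : Prop :=
  ∃ c r, s = closedBall c r

theorem isClosedBall_empty {α : Type*} [PseudoMetricSpace α] [Nonempty α] :
    IsClosedBall (∅ : Set α) :=
  ⟨Classical.arbitrary α, -1, (closedBall_eq_empty.2 (by norm_num)).symm⟩

theorem isClosedBall_iff {α : Type*} [MetricSpace α] [Nonempty α] {s : Set α} :
    IsClosedBall s ↔ s = ∅ ∨ (∃ x, s = {x}) ∨ ∃ c r, 0 < r ∧ s = closedBall c r := by
  constructor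
  · rintro ⟨c, r, rfl⟩
    rcases lt_trichotomy r 0 with hr | rfl | hr
    · exact .inl (closedBall_eq_empty.2 hr)
    · exact .inr (.inl ⟨c, closedBall_zero⟩)
    · exact .inr (.inr ⟨c, r, hr, rfl⟩)
  · rintro (rfl | ⟨x, rfl⟩ | ⟨c, r, -, rfl⟩)
    · exact isClosedBall_empty
    · exact ⟨x, 0, closedBall_zero.symm⟩
    · exact ⟨c, r, rfl⟩

section RealInner

variable {F : Type*} [NormedAddCommGroup F] [InnerProductSpace ℝ F]

theorem isClosedBall_quadratic_nonpos {A : ℝ} (hA : 0 < A) (b : F) (C : ℝ) :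
    IsClosedBall {x | A * ‖x‖ ^ 2 + 2 * ⟪b, x⟫ + C ≤ 0} := by
  have completed_square (x : F) :
      A * ‖x‖ ^ 2 + 2 * ⟪b, x⟫ + C = A * (‖x - -A⁻¹ • b‖ ^ 2 - (‖b‖ ^ 2 / A - C) / A) := by
    rw [neg_smul, sub_neg_eq_add, norm_add_sq_real, real_inner_smul_right, norm_smul,
      real_inner_comm, Real.norm_of_nonneg (inv_nonneg.2 hA.le)]
    field_simp
    ring
  have nonpos_iff (x : F) : A * ‖x‖ ^ 2 + 2 * ⟪b, x⟫ + C ≤ 0 ↔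
      ‖x - -A⁻¹ • b‖ ^ 2 ≤ (‖b‖ ^ 2 / A - C) / A := by
    rw [completed_square, ← smul_eq_mul, smul_nonpos_iff_nonpos_of_pos_left hA, sub_nonpos]
  simp only [nonpos_iff]
  rcases lt_or_ge ((‖b‖ ^ 2 / A - C) / A) 0 with hneg | hnonneg
  · convert isClosedBall_empty (α := F)
    exact Set.eq_empty_of_forall_notMem fun x hx ↦ (hneg.trans_le (sq_nonneg _)).not_ge hx
  · refine ⟨-A⁻¹ • b, √((‖b‖ ^ 2 / A - C) / A), Set.ext fun x ↦ ?_⟩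
    rw [mem_closedBall_iff_norm, Real.le_sqrt (norm_nonneg _) hnonneg, Set.mem_ofPred_eq]

theorem eq_smul_of_closedBall_subset_halfSpace {c m : F} {r : ℝ} (h0 : 0 ∈ closedBall c r)
    (hm : m ≠ 0) (hpos : ∀ x ∈ closedBall c r, 0 ≤ ⟪m, x⟫) : c = (r / ‖m‖) • m := by
  have hr : 0 ≤ r := dist_nonneg.trans h0
  have hm' : ‖m‖ ≠ 0 := norm_ne_zero_iff.2 hm
  have norm_c : ‖c‖ ≤ r := by simpa using h0
  have norm_smul_m : ‖(r / ‖m‖) • m‖ = r := by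
    rw [norm_smul, Real.norm_of_nonneg (by positivity), div_mul_cancel₀ _ hm']
  have inner_ge : r * ‖m‖ ≤ ⟪m, c⟫ := by
    have := hpos (c - (r / ‖m‖) • m) (by simp [norm_smul_m])
    rw [inner_sub_right, real_inner_smul_right, real_inner_self_eq_norm_sq, sub_nonneg] at this
    exact this.trans_eq' (by field_simp)
  have inner_ge' : r ^ 2 ≤ ⟪c, (r / ‖m‖) • m⟫ := by
    rw [real_inner_smul_right, real_inner_comm]
    calc r ^ 2 = r / ‖m‖ * (r * ‖m‖) := by field_simp
      _ ≤ r / ‖m‖ * ⟪m, c⟫ := by gcongr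
  have norm_sub_le : ‖c - (r / ‖m‖) • m‖ ^ 2 ≤ 0 := by
    rw [norm_sub_sq_real, norm_smul_m]
    linarith [pow_le_pow_left₀ (norm_nonneg c) norm_c 2]
  exact sub_eq_zero.1 (norm_eq_zero.1 (pow_eq_zero_iff two_ne_zero |>.1
    (norm_sub_le.antisymm (sq_nonneg _))))

theorem IsClosedBall.exists_mem_iff_norm_sq_le_inner {s : Set F} (hs : IsClosedBall s)
    (h0 : 0 ∈ s) {m : F} (hm : m ≠ 0) (hpos : ∀ x ∈ s, 0 ≤ ⟪m, x⟫) :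
    ∃ R, 0 ≤ R ∧ ∀ x, x ∈ s ↔ ‖x‖ ^ 2 ≤ R * ⟪m, x⟫ := by
  obtain ⟨c, r, rfl⟩ := hs
  have hr : 0 ≤ r := dist_nonneg.trans h0
  have hm' : ‖m‖ ≠ 0 := norm_ne_zero_iff.2 hm
  refine ⟨2 * (r / ‖m‖), by positivity, fun x ↦ ?_⟩
  rw [mem_closedBall_iff_norm, ← sq_le_sq₀ (norm_nonneg _) hr, norm_sub_sq_real,
    eq_smul_of_closedBall_subset_halfSpace h0 hm hpos, real_inner_smul_right, real_inner_comm,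
    norm_smul, Real.norm_of_nonneg (by positivity), div_mul_cancel₀ _ hm', ← mul_assoc,
    add_le_iff_nonpos_left, sub_nonpos]

end RealInner

theorem inner_conj_eq_re_mul (m z : ℂ) : ⟪conj m, z⟫ = (m * z).re := by
  rw [Complex.inner, Complex.conj_conj, mul_comm]

theorem IsClosedBall.preimage_mul_add {D : Set ℂ} (hD : IsClosedBall D) {m : ℂ} (hm : m ≠ 0)
    (k : ℂ) : IsClosedBall ((fun z ↦ m * z + k) ⁻¹' D) := by
  obtain ⟨c, r, rfl⟩ := hD
  refine ⟨(c - k) / m, r / ‖m‖, Set.ext fun z ↦ ?_⟩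
  have : m * z + k - c = m * (z - (c - k) / m) := by field_simp; ring
  rw [Set.mem_preimage, mem_closedBall_iff_norm, mem_closedBall_iff_norm, this, norm_mul,
    le_div_iff₀' (norm_pos_iff.2 hm)]

theorem IsClosedBall.inv {D : Set ℂ} (hD : IsClosedBall D) (h0 : 0 ∉ D) :
    IsClosedBall D⁻¹ := by
  obtain ⟨c, r, rfl⟩ := hD
  rcases lt_or_ge r 0 with hr | hr
  · rw [closedBall_eq_empty.2 hr, Set.inv_empty]
    exact isClosedBall_empty
  have hrc : 0 < ‖c‖ ^ 2 - r ^ 2 := by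
    rw [mem_closedBall_iff_norm, zero_sub, norm_neg, not_le] at h0
    exact sub_pos.2 (by gcongr)
  suffices (closedBall c r)⁻¹ = _ from this ▸ isClosedBall_quadratic_nonpos hrc (-conj c) 1
  ext z
  rw [Set.mem_inv, Set.mem_ofPred_eq]
  by_cases hz : z = 0
  · subst hz
    simpa [zero_lt_one.not_ge] using h0
  have norm_mul_sub : ‖z‖ ^ 2 * ‖z⁻¹ - c‖ ^ 2 = ‖1 - c * z‖ ^ 2 := by
    rw [← mul_pow, ← norm_mul, mul_sub, mul_inv_cancel₀ hz, mul_comm]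
  rw [mem_closedBall_iff_norm, ← sq_le_sq₀ (norm_nonneg _) hr,
    ← mul_le_mul_iff_right₀ (by positivity : 0 < ‖z‖ ^ 2), norm_mul_sub, norm_sub_sq_real,
    inner_neg_left, inner_conj_eq_re_mul, Complex.inner, norm_mul]
  simp only [norm_one, map_one, mul_one]
  constructor <;> intro h <;> linarith

end ClosedBalls

section Paraboloid

open scoped ComplexConjugate

variable {S : Set (ℂ × ℝ)}

theorem exists_tangent_section (hS : ∀ m ≠ 0, IsClosedBall {t : ℂ | (t, (m * t).re) ∈ S})
    (h0 : (0, 0) ∈ S) (hpos : ∀ z ∈ S, 0 ≤ z.2) {m : ℂ} (hm : m ≠ 0) :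
    ∃ R, 0 ≤ R ∧ ∀ t, (t, (m * t).re) ∈ S ↔ ‖t‖ ^ 2 ≤ R * (m * t).re := by
  simpa only [inner_conj_eq_re_mul, Set.mem_ofPred_eq] using
    (hS m hm).exists_mem_iff_norm_sq_le_inner (by simpa using h0) ((map_ne_zero conj).2 hm)
      fun t ht ↦ (inner_conj_eq_re_mul m t).symm ▸ hpos _ ht

theorem tangent_section_le {m₁ m₂ s : ℂ} {R₁ R₂ : ℝ}
    (h₁ : ∀ t, (t, (m₁ * t).re) ∈ S ↔ ‖t‖ ^ 2 ≤ R₁ * (m₁ * t).re)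
    (hR₂ : 0 ≤ R₂) (h₂ : ∀ t, (t, (m₂ * t).re) ∈ S ↔ ‖t‖ ^ 2 ≤ R₂ * (m₂ * t).re)
    (hs : (m₁ * s).re = (m₂ * s).re) (hpos : 0 < (m₁ * s).re) : R₁ ≤ R₂ := by
  rcases le_or_gt R₁ 0 with hR₁ | hR₁
  · exact hR₁.trans hR₂
  have hs0 : 0 < ‖s‖ := norm_pos_iff.2 fun h ↦ by simp [h] at hpos
  set τ : ℝ := R₁ * (m₁ * s).re / ‖s‖ ^ 2 with hτ
  have hτ0 : 0 < τ := by positivity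
  have re_mul (m : ℂ) : (m * (τ * s)).re = τ * (m * s).re := by
    rw [mul_left_comm, Complex.re_ofReal_mul]
  have norm_mul_s : ‖(τ : ℂ) * s‖ ^ 2 = τ * (R₁ * (m₁ * s).re) := by
    rw [norm_mul, mul_pow, Complex.norm_real, Real.norm_of_nonneg hτ0.le, hτ]
    field_simp
  have mem : ((τ : ℂ) * s, (m₁ * (τ * s)).re) ∈ S := by
    rw [h₁, norm_mul_s, re_mul, mul_left_comm]
  rw [re_mul, hs, ← re_mul, h₂, norm_mul_s, re_mul, ← hs, mul_left_comm] at mem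
  exact le_of_mul_le_mul_right (le_of_mul_le_mul_left (by linarith) hτ0) hpos

theorem exists_re_mul_eq_pos {m₁ m₂ : ℂ} (h : (m₁ * conj m₂).im ≠ 0) :
    ∃ s, (m₁ * s).re = (m₂ * s).re ∧ 0 < (m₁ * s).re := by
  set ε := (m₁ * conj m₂).im with hε
  simp only [Complex.mul_im, Complex.conj_re, Complex.conj_im] at hε
  have re_eq₁ : (m₁ * ⟨ε * (m₁.im - m₂.im), ε * (m₁.re - m₂.re)⟩).re = ε ^ 2 := by
    simp only [Complex.mul_re, hε]
    ring
  have re_eq₂ : (m₂ * ⟨ε * (m₁.im - m₂.im), ε * (m₁.re - m₂.re)⟩).re = ε ^ 2 := by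
    simp only [Complex.mul_re, hε]
    ring
  exact ⟨_, re_eq₁.trans re_eq₂.symm, (sq_pos_of_ne_zero h).trans_eq re_eq₁.symm⟩

theorem eq_of_forall_im_mul_conj_ne_zero {α : Type*} {R : ℂ → α}
    (hR : ∀ m₁ m₂ : ℂ, (m₁ * conj m₂).im ≠ 0 → R m₁ = R m₂) {m : ℂ} (hm : m ≠ 0) :
    R m = R 1 := by
  by_cases him : m.im = 0
  · have hre : m.re ≠ 0 := fun hre ↦ hm (Complex.ext hre him)
    exact (hR m Complex.I (by simpa using hre)).trans (hR Complex.I 1 (by simp))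
  · exact hR m 1 (by simpa using him)

theorem exists_ne_zero_re_mul_eq {t : ℂ} (ht : t ≠ 0) (y : ℝ) : ∃ m ≠ 0, (m * t).re = y := by
  refine ⟨(y + Complex.I) / t, div_ne_zero (fun h ↦ ?_) ht, ?_⟩
  · simpa using congrArg Complex.im h
  · simp [div_mul_cancel₀ _ ht]

theorem exists_mem_iff_norm_sq_le_mul
    (hS : ∀ m ≠ 0, IsClosedBall {t : ℂ | (t, (m * t).re) ∈ S})
    (h0 : (0, 0) ∈ S) (hpos : ∀ z ∈ S, 0 ≤ z.2) (hne : ∃ z ∈ S, z.1 ≠ 0) :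
    ∃ R, 0 < R ∧ ∀ t ≠ 0, ∀ y, (t, y) ∈ S ↔ ‖t‖ ^ 2 ≤ R * y := by
  choose! R hR0 hR using fun m (hm : m ≠ 0) ↦ exists_tangent_section hS h0 hpos hm
  -- The planes `y = re (m₁ * t)` and `y = re (m₂ * t)` meet in a line, on which the two tangent
  -- disks have the same points, so their sizes agree.
  have R_eq : ∀ m₁ m₂ : ℂ, (m₁ * conj m₂).im ≠ 0 → R m₁ = R m₂ := fun m₁ m₂ h ↦ by
    have hm₁ : m₁ ≠ 0 := fun h0 ↦ by simp [h0] at h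
    have hm₂ : m₂ ≠ 0 := fun h0 ↦ by simp [h0] at h
    obtain ⟨s, hs, hs_pos⟩ := exists_re_mul_eq_pos h
    exact le_antisymm (tangent_section_le (hR m₁ hm₁) (hR0 m₂ hm₂) (hR m₂ hm₂) hs hs_pos)
      (tangent_section_le (hR m₂ hm₂) (hR0 m₁ hm₁) (hR m₁ hm₁) hs.symm (hs ▸ hs_pos))
  have mem_iff : ∀ t ≠ 0, ∀ y, (t, y) ∈ S ↔ ‖t‖ ^ 2 ≤ R 1 * y := fun t ht y ↦ by
    obtain ⟨m, hm, rfl⟩ := exists_ne_zero_re_mul_eq ht y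
    rw [hR m hm, eq_of_forall_im_mul_conj_ne_zero R_eq hm]
  obtain ⟨⟨t, y⟩, hty, ht⟩ := hne
  have norm_sq_pos : 0 < ‖t‖ ^ 2 := pow_pos (norm_pos_iff.2 ht) 2
  exact ⟨R 1, pos_of_mul_pos_left (norm_sq_pos.trans_le ((mem_iff t ht y).1 hty)) (hpos _ hty),
    mem_iff⟩

theorem pos_and_inv_eq_of_forall_one_le_mul_iff {ρ R k s : ℝ} (hρ : 0 ≤ ρ) (hR : 0 < R)
    (h : ∀ y, 1 ≤ ρ * (k + y) ↔ s ≤ R * y) : 0 < ρ ∧ ρ⁻¹ = R⁻¹ * s + k := by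
  have at_boundary : 1 ≤ ρ * (k + R⁻¹ * s) := (h _).2 (by field_simp; rfl)
  have hρ_pos : 0 < ρ := hρ.lt_of_ne fun h0 ↦ by simp [← h0, zero_lt_one.not_ge] at at_boundary
  have le_inv : s ≤ R * (ρ⁻¹ - k) := (h _).1 (by field_simp; linarith)
  refine ⟨hρ_pos, le_antisymm ?_ ?_⟩
  · rwa [inv_le_iff_one_le_mul₀' hρ_pos, add_comm]
  · rw [← le_sub_iff_add_le, inv_mul_le_iff₀ hR]
    exact le_inv

end Paraboloid

section DiskSections

open Metric Topology
open scoped ComplexConjugate RealInnerProductSpace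

variable {E F : Type*} [NormedAddCommGroup E] [NormedSpace ℂ E]
  [NormedAddCommGroup F] [NormedSpace ℂ F]

/-- Every complex line meets `K` in the empty set, a point or a closed disk. The line through `p`
in the direction `v` is parametrized by `z ↦ p + z • v`, and `IsClosedBall` covers the three
cases. -/
def HasDiskSections (K : Set E) : Prop :=
  ∀ p v : E, v ≠ 0 → IsClosedBall ((fun z : ℂ ↦ p + z • v) ⁻¹' K)

theorem image_closedBall_line (p v : E) (z₀ : ℂ) (r : ℝ) :
    (fun z : ℂ ↦ p + z • v) '' closedBall z₀ r =
      {x | ∃ z : ℂ, ‖z‖ ≤ r ∧ x = p + z₀ • v + z • v} := by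
  ext x
  constructor
  · rintro ⟨z, hz, rfl⟩
    exact ⟨z - z₀, mem_closedBall_iff_norm.1 hz, by module⟩
  · rintro ⟨z, hz, rfl⟩
    exact ⟨z + z₀, by simpa using hz, by module⟩

theorem isClosedBall_preimage_line_iff {K : Set E} {p v : E} (hv : v ≠ 0) :
    IsClosedBall ((fun z : ℂ ↦ p + z • v) ⁻¹' K) ↔
      {x | ∃ z : ℂ, x = p + z • v} ∩ K = ∅ ∨
      (∃ x : E, {x' | ∃ z : ℂ, x' = p + z • v} ∩ K = {x}) ∨
      (∃ (c : E) (r : ℝ), 0 < r ∧ (∃ z : ℂ, c = p + z • v) ∧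
        {x | ∃ z : ℂ, x = p + z • v} ∩ K = {x | ∃ z : ℂ, ‖z‖ ≤ r ∧ x = c + z • v}) := by
  set f : ℂ → E := fun z ↦ p + z • v
  have hf : f.Injective := (add_right_injective p).comp (smul_left_injective ℂ hv)
  have line_inter : {x | ∃ z : ℂ, x = p + z • v} ∩ K = f '' (f ⁻¹' K) := by
    rw [Set.image_preimage_eq_range_inter]
    simp only [Set.range, eq_comm, f]
  rw [line_inter, Set.image_eq_empty, isClosedBall_iff]
  refine or_congr_right (or_congr ⟨?_, ?_⟩ ⟨?_, ?_⟩)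
  · rintro ⟨z, hz⟩
    exact ⟨f z, by rw [hz, Set.image_singleton]⟩
  · rintro ⟨x, hx⟩
    obtain ⟨z, -, rfl⟩ : x ∈ f '' (f ⁻¹' K) := hx ▸ rfl
    exact ⟨z, hf.image_injective (by rw [hx, Set.image_singleton])⟩
  · rintro ⟨z, r, hr, hz⟩
    exact ⟨f z, r, hr, ⟨z, rfl⟩, by rw [hz, image_closedBall_line]⟩
  · rintro ⟨_, r, hr, ⟨z, rfl⟩, hz⟩
    exact ⟨z, r, hr, hf.image_injective (by rw [hz, image_closedBall_line])⟩

theorem hasDiskSections_closedBall {H : Type*} [NormedAddCommGroup H]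
    [InnerProductSpace ℂ H] (c : H) (r : ℝ) : HasDiskSections (closedBall c r) := by
  intro p v hv
  rcases lt_or_ge r 0 with hr | hr
  · rw [closedBall_eq_empty.2 hr, Set.preimage_empty]
    exact isClosedBall_empty
  have hv' : 0 < ‖v‖ ^ 2 := by positivity
  suffices (fun z : ℂ ↦ p + z • v) ⁻¹' closedBall c r = _ from
    this ▸ isClosedBall_quadratic_nonpos hv' (inner ℂ v (p - c)) (‖p - c‖ ^ 2 - r ^ 2)
  ext z
  have norm_line_sq : ‖p + z • v - c‖ ^ 2 =
      ‖p - c‖ ^ 2 + 2 * ⟪inner ℂ v (p - c), z⟫ + ‖v‖ ^ 2 * ‖z‖ ^ 2 := by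
    rw [add_sub_right_comm, norm_add_sq (𝕜 := ℂ), inner_smul_right, Complex.inner, norm_smul,
      inner_conj_symm, RCLike.re_eq_complex_re]
    ring
  rw [Set.mem_preimage, mem_closedBall_iff_norm, ← sq_le_sq₀ (norm_nonneg _) hr, norm_line_sq,
    Set.mem_ofPred_eq]
  constructor <;> intro h <;> linarith

namespace HasDiskSections

theorem preimage {K : Set F} (hK : HasDiskSections K) (f : E →ᵃ[ℂ] F) (hf : Function.Injective f) :
    HasDiskSections (f ⁻¹' K) := by
  intro p v hv
  have hlin : f.linear v ≠ 0 := by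
    rwa [Ne, LinearMap.map_eq_zero_iff _ (f.linear_injective_iff.2 hf)]
  convert hK (f p) (f.linear v) hlin using 1
  ext z
  have : f (p + z • v) = f p + z • f.linear v := by
    rw [add_comm, ← vadd_eq_add, f.map_vadd, map_smul, vadd_eq_add, add_comm]
  rw [Set.mem_preimage, Set.mem_preimage, Set.mem_preimage, this]

variable {K : Set E}

theorem convex (hK : HasDiskSections K) : Convex ℝ K := by
  rw [convex_iff_add_mem]
  intro x hx y hy a b ha hb hab
  rcases eq_or_ne x y with rfl | hxy
  · rwa [← add_smul, hab, one_smul]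
  obtain ⟨c, r, hball⟩ := hK x (y - x) (sub_ne_zero.2 hxy.symm)
  have h0 : (0 : ℂ) ∈ (fun z : ℂ ↦ x + z • (y - x)) ⁻¹' K := by simpa
  have h1 : (1 : ℂ) ∈ (fun z : ℂ ↦ x + z • (y - x)) ⁻¹' K := by simpa
  rw [hball] at h0 h1
  have hmem := convex_iff_add_mem.1 (convex_closedBall c r) h0 h1 ha hb hab
  rw [← hball, Set.mem_preimage] at hmem
  convert hmem using 1
  rw [smul_zero, zero_add, Complex.real_smul, mul_one, Complex.coe_smul,
    eq_sub_of_add_eq hab]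
  module

theorem isClosed (hK : HasDiskSections K) (hint : (interior K).Nonempty) : IsClosed K := by
  refine isClosed_of_closure_subset fun y hy ↦ ?_
  obtain ⟨x, hx⟩ := hint
  rcases eq_or_ne x y with rfl | hxy
  · exact interior_subset hx
  obtain ⟨c, r, hball⟩ := hK x (y - x) (sub_ne_zero.2 hxy.symm)
  have closed_section : IsClosed ((fun z : ℝ ↦ x + z • (y - x)) ⁻¹' K) := by
    have : (fun z : ℝ ↦ x + z • (y - x)) = (fun z : ℂ ↦ x + z • (y - x)) ∘ (↑) := by
      ext z; simp
    rw [this, Set.preimage_comp, hball]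
    exact isClosed_closedBall.preimage Complex.continuous_ofReal
  have Ioo_subset : Set.Ioo 0 1 ⊆ (fun z : ℝ ↦ x + z • (y - x)) ⁻¹' K := fun z hz ↦
    interior_subset (s := K) (hK.convex.openSegment_interior_closure_subset_interior hx hy
      (openSegment_eq_image' ℝ x y ▸ Set.mem_image_of_mem _ hz))
  have one_mem : (1 : ℝ) ∈ closure (Set.Ioo 0 1) := by
    rw [closure_Ioo zero_ne_one]
    exact Set.right_mem_Icc.2 zero_le_one
  simpa using closure_minimal Ioo_subset closed_section one_mem

end HasDiskSections

theorem isBounded_of_convex_of_forall_exists_smul_notMem {V : Type*} [NormedAddCommGroup V]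
    [NormedSpace ℝ V] [FiniteDimensional ℝ V] {s : Set V} (hs : Convex ℝ s) (h0 : s ∈ 𝓝 0)
    (hray : ∀ v ≠ 0, ∃ r : ℝ, 0 < r ∧ r • v ∉ s) : Bornology.IsBounded s := by
  have gauge_pos : ∀ v ≠ 0, 0 < gauge s v := fun v hv ↦ by
    obtain ⟨r, hr, hrv⟩ := hray v hv
    refine (gauge_nonneg v).lt_of_ne' fun hzero ↦ hrv ?_
    refine setOfPred_gauge_lt_one_subset_self hs (mem_of_mem_nhds h0) (absorbent_nhds_zero h0) ?_
    rw [Set.mem_ofPred_eq, gauge_smul_of_nonneg hr.le, hzero, smul_zero]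
    exact zero_lt_one
  cases subsingleton_or_nontrivial V
  · exact (Set.toFinite s).isBounded
  obtain ⟨u, hu, gauge_u_le⟩ := (isCompact_sphere (0 : V) 1).exists_isMinOn
    (NormedSpace.sphere_nonempty.2 zero_le_one) (continuous_gauge hs h0).continuousOn
  have hu_pos : 0 < gauge s u := gauge_pos u (ne_of_mem_sphere hu one_ne_zero)
  refine isBounded_iff_forall_norm_le.2 ⟨(gauge s u)⁻¹, fun x hx ↦ ?_⟩
  rcases eq_or_ne x 0 with rfl | hx0
  · simpa using hu_pos.le
  have hx' : ‖x‖ ≠ 0 := norm_ne_zero_iff.2 hx0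
  have hle : gauge s u ≤ gauge s (‖x‖⁻¹ • x) :=
    gauge_u_le (by simp [norm_smul, hx'])
  rw [gauge_smul_of_nonneg (by positivity), smul_eq_mul] at hle
  have := gauge_le_one_of_mem hx
  rw [le_inv_comm₀ (by positivity) hu_pos]
  exact hle.trans (mul_le_of_le_one_right (by positivity) this)

namespace HasDiskSections

theorem isCompact [FiniteDimensional ℂ E] {K : Set E} (hK : HasDiskSections K)
    (hint : (interior K).Nonempty) : IsCompact K := by
  have : FiniteDimensional ℝ E := FiniteDimensional.complexToReal E
  have : ProperSpace E := FiniteDimensional.proper_real E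
  obtain ⟨x, hx⟩ := hint
  have bounded_translate : Bornology.IsBounded ((x + ·) ⁻¹' K) := by
    refine isBounded_of_convex_of_forall_exists_smul_notMem (hK.convex.translate_preimage_right x)
      ((continuous_const_add x).continuousAt.preimage_mem_nhds
        (by simpa using mem_interior_iff_mem_nhds.1 hx)) fun v hv ↦ ?_
    obtain ⟨c, r, hball⟩ := hK x v hv
    refine ⟨‖c‖ + |r| + 1, by positivity, fun hmem ↦ ?_⟩
    have hmem' : ((‖c‖ + |r| + 1 : ℝ) : ℂ) ∈ closedBall c r :=
      hball ▸ (by simpa only [Set.mem_preimage, Complex.coe_smul] using hmem)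
    have := norm_le_norm_add_norm_sub' ((‖c‖ + |r| + 1 : ℝ) : ℂ) c
    rw [Complex.norm_of_nonneg (by positivity)] at this
    linarith [mem_closedBall_iff_norm.1 hmem', le_abs_self r]
  refine isCompact_of_isClosed_isBounded (hK.isClosed ⟨x, hx⟩) ?_
  rw [← Set.image_preimage_eq K (add_left_surjective x)]
  exact (isometry_add_left x).lipschitz.isBounded_image bounded_translate

end HasDiskSections

end DiskSections

section QuadraticForm

variable {𝕜 V : Type*} [RCLike 𝕜] [AddCommGroup V] [Module 𝕜 V] {G : V → ℝ}

/-- Along every line `q` is, up to an additive constant, a positive multiple of the squared distance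
to a point of the parameter line. A positive definite Hermitian form has this property, and
`IsSqDistOnLines.exists_linearEquiv_eq_add_norm_sq` is a converse. -/
def IsSqDistOnLines (𝕜 : Type*) {V : Type*} [RCLike 𝕜] [AddCommGroup V] [Module 𝕜 V]
    (q : V → ℝ) : Prop :=
  ∀ u v : V, v ≠ 0 → ∃ (t₀ : 𝕜) (a c : ℝ), 0 < a ∧ ∀ t : 𝕜, q (u + t • v) = a * ‖t - t₀‖ ^ 2 + c

theorem IsSqDistOnLines.pos_and_smul (hG : IsSqDistOnLines 𝕜 G) (h0 : G 0 = 0)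
    (hnonneg : ∀ v, 0 ≤ G v) {v : V} (hv : v ≠ 0) :
    0 < G v ∧ ∀ t : 𝕜, G (t • v) = ‖t‖ ^ 2 * G v := by
  obtain ⟨t₀, a, c, ha, hG⟩ := hG 0 v hv
  simp only [zero_add] at hG
  have at_zero : a * ‖t₀‖ ^ 2 + c = 0 := by simpa [h0] using (hG 0).symm
  have hc : 0 ≤ c := by simpa [hG] using hnonneg (t₀ • v)
  have hmul : a * ‖t₀‖ ^ 2 = 0 := by nlinarith [sq_nonneg ‖t₀‖]
  have ht₀ : t₀ = 0 := by simpa [ha.ne'] using hmul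
  have hc₀ : c = 0 := by linarith
  have hGt (t : 𝕜) : G (t • v) = a * ‖t‖ ^ 2 := by rw [hG, ht₀, hc₀, sub_zero, add_zero]
  have hGv : G v = a := by simpa using hGt 1
  exact ⟨hGv ▸ ha, fun t ↦ by rw [hGt, hGv, mul_comm]⟩

theorem IsSqDistOnLines.exists_add_real_smul_eq (hG : IsSqDistOnLines 𝕜 G) (h0 : G 0 = 0)
    (hsmul : ∀ (t : 𝕜) v, G (t • v) = ‖t‖ ^ 2 * G v) (u v : V) :
    ∃ β : ℝ, ∀ τ : ℝ, G (u + (τ : 𝕜) • v) = G u + 2 * β * τ + G v * τ ^ 2 := by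
  have expand (u v : V) (hv : v ≠ 0) :
      ∃ A β : ℝ, ∀ τ : ℝ, G (u + (τ : 𝕜) • v) = G u + 2 * β * τ + A * τ ^ 2 := by
    obtain ⟨t₀, a, c, -, hG⟩ := hG u v hv
    have at_zero : G u = a * ‖t₀‖ ^ 2 + c := by simpa using hG 0
    refine ⟨a, -a * RCLike.re t₀, fun τ ↦ ?_⟩
    rw [hG, at_zero, norm_sub_sq (𝕜 := 𝕜), RCLike.inner_apply, RCLike.conj_ofReal,
      RCLike.re_mul_ofReal, RCLike.norm_ofReal, sq_abs]
    ring
  have smul_ofReal (τ : ℝ) (v : V) : G ((τ : 𝕜) • v) = τ ^ 2 * G v := by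
    rw [hsmul, RCLike.norm_ofReal, sq_abs]
  rcases eq_or_ne v 0 with rfl | hv
  · exact ⟨0, fun τ ↦ by simp [h0]⟩
  rcases eq_or_ne u 0 with rfl | hu
  · exact ⟨0, fun τ ↦ by simp [h0, smul_ofReal, mul_comm]⟩
  obtain ⟨A, β, hβ⟩ := expand u v hv
  obtain ⟨A', β', hβ'⟩ := expand v u hu
  -- Homogeneity exchanges `u` and `v`, which identifies the leading coefficient.
  have reversal (τ : ℝ) (hτ : τ ≠ 0) :
      G u + 2 * β * τ + A * τ ^ 2 = G v * τ ^ 2 + 2 * β' * τ + A' := by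
    have : u + (τ : 𝕜) • v = (τ : 𝕜) • (v + ((τ⁻¹ : ℝ) : 𝕜) • u) := by
      rw [smul_add, smul_smul, ← RCLike.ofReal_mul, mul_inv_cancel₀ hτ, RCLike.ofReal_one,
        one_smul, add_comm]
    rw [← hβ, this, smul_ofReal, hβ']
    field_simp
  have A_eq : A = G v := by
    linarith [reversal 1 one_ne_zero, reversal (-1) (by norm_num), reversal 2 two_ne_zero]
  exact ⟨β, A_eq ▸ hβ⟩

theorem sqrt_add_le_sqrt_add_sqrt (hnonneg : ∀ v, 0 ≤ G v)
    (hline : ∀ u v, ∃ β : ℝ, ∀ τ : ℝ, G (u + (τ : 𝕜) • v) = G u + 2 * β * τ + G v * τ ^ 2)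
    (u v : V) : √(G (u + v)) ≤ √(G u) + √(G v) := by
  obtain ⟨β, hβ⟩ := hline u v
  have hdiscrim : discrim (G v) (2 * β) (G u) ≤ 0 := discrim_le_zero fun τ ↦ by
    linarith [hβ τ ▸ hnonneg (u + (τ : 𝕜) • v)]
  have cauchy_schwarz : β ≤ √(G u) * √(G v) := by
    rw [discrim] at hdiscrim
    rw [← Real.sqrt_mul (hnonneg u)]
    exact Real.le_sqrt_of_sq_le (by linarith)
  have hadd : G (u + v) = G u + 2 * β + G v := by simpa using hβ 1
  rw [Real.sqrt_le_left (by positivity), hadd, add_sq, Real.sq_sqrt (hnonneg u),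
    Real.sq_sqrt (hnonneg v)]
  linarith

theorem exists_linearEquiv_eq_norm_sq [FiniteDimensional 𝕜 V]
    (hpos : ∀ v ≠ 0, 0 < G v) (hsmul : ∀ (t : 𝕜) v, G (t • v) = ‖t‖ ^ 2 * G v)
    (hline : ∀ u v, ∃ β : ℝ, ∀ τ : ℝ, G (u + (τ : 𝕜) • v) = G u + 2 * β * τ + G v * τ ^ 2) :
    ∃ φ : V ≃ₗ[𝕜] EuclideanSpace 𝕜 (Fin (Module.finrank 𝕜 V)), ∀ v, G v = ‖φ v‖ ^ 2 := by
  have hzero : G 0 = 0 := by simpa using hsmul 0 0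
  have hnonneg (v : V) : 0 ≤ G v := by
    rcases eq_or_ne v 0 with rfl | hv
    exacts [hzero.ge, (hpos v hv).le]
  let : Norm V := ⟨fun v ↦ √(G v)⟩
  have norm_sq (v : V) : ‖v‖ ^ 2 = G v := Real.sq_sqrt (hnonneg v)
  have core : NormedSpace.Core 𝕜 V :=
    { norm_nonneg := fun v ↦ Real.sqrt_nonneg _
      norm_smul := fun t v ↦ by
        refine (sq_eq_sq₀ (Real.sqrt_nonneg _)
          (mul_nonneg (norm_nonneg _) (Real.sqrt_nonneg _))).1 ?_
        rw [mul_pow, Real.sq_sqrt (hnonneg _), Real.sq_sqrt (hnonneg _), hsmul]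
      norm_triangle := sqrt_add_le_sqrt_add_sqrt hnonneg hline
      norm_eq_zero_iff := fun v ↦ by
        rw [← sq_eq_zero_iff, norm_sq]
        exact ⟨fun h ↦ by_contra fun hv ↦ (hpos v hv).ne' h, fun h ↦ h ▸ hzero⟩ }
  let : NormedAddCommGroup V := .ofCore core
  let : NormedSpace 𝕜 V := .ofCore core
  have parallelogram (u v : V) :
      ‖u + v‖ * ‖u + v‖ + ‖u - v‖ * ‖u - v‖ = 2 * (‖u‖ * ‖u‖ + ‖v‖ * ‖v‖) := by
    obtain ⟨β, hβ⟩ := hline u v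
    have hadd : G (u + v) = G u + 2 * β + G v := by simpa using hβ 1
    have hsub : G (u - v) = G u - 2 * β + G v := by
      simpa [← sub_eq_add_neg] using hβ (-1)
    simp only [← sq, norm_sq, hadd, hsub]
    ring
  let : InnerProductSpace 𝕜 V := .ofNorm 𝕜 parallelogram
  refine ⟨(stdOrthonormalBasis 𝕜 V).repr.toLinearEquiv, fun v ↦ ?_⟩
  rw [LinearIsometryEquiv.coe_toLinearEquiv, LinearIsometryEquiv.norm_map, norm_sq]

theorem IsSqDistOnLines.exists_linearEquiv_eq_add_norm_sq [FiniteDimensional 𝕜 V] {q : V → ℝ}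
    (hq : IsSqDistOnLines 𝕜 q) (hmin : ∀ v, q 0 ≤ q v) :
    ∃ φ : V ≃ₗ[𝕜] EuclideanSpace 𝕜 (Fin (Module.finrank 𝕜 V)), ∀ v, q v = q 0 + ‖φ v‖ ^ 2 := by
  set G : V → ℝ := fun v ↦ q v - q 0
  have G_apply (v : V) : G v = q v - q 0 := rfl
  have G_zero : G 0 = 0 := sub_self _
  have hG : IsSqDistOnLines 𝕜 G := fun u v hv ↦ by
    obtain ⟨t₀, a, c, ha, hq⟩ := hq u v hv
    exact ⟨t₀, a, c - q 0, ha, fun t ↦ by rw [G_apply, hq, add_sub_assoc]⟩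
  have pos_and_smul : ∀ v ≠ 0, 0 < G v ∧ ∀ t : 𝕜, G (t • v) = ‖t‖ ^ 2 * G v := fun v hv ↦
    hG.pos_and_smul G_zero (fun v ↦ sub_nonneg.2 (hmin v)) hv
  have G_smul (t : 𝕜) (v : V) : G (t • v) = ‖t‖ ^ 2 * G v := by
    rcases eq_or_ne v 0 with rfl | hv
    · rw [smul_zero, G_zero, mul_zero]
    · exact (pos_and_smul v hv).2 t
  obtain ⟨φ, hφ⟩ := exists_linearEquiv_eq_norm_sq (fun v hv ↦ (pos_and_smul v hv).1) G_smul
    (hG.exists_add_real_smul_eq G_zero G_smul)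
  exact ⟨φ, fun v ↦ by rw [← hφ, G_apply, add_sub_cancel]⟩

end QuadraticForm

section SectionDiam

variable {E : Type*} [NormedAddCommGroup E] [NormedSpace ℂ E] {K : Set E} {w : E →L[ℂ] ℂ}

/-- The real hyperplane `re w = 0` supports `K` and touches it at the origin only. -/
structure TouchesAtZero (w : E →L[ℂ] ℂ) (K : Set E) : Prop where
  zero_mem : 0 ∈ K
  re_pos : ∀ y ∈ K, y ≠ 0 → 0 < (w y).re

/-- The largest real `τ` with `τ • x ∈ K`. It is used for `K` with disk sections that touches
`re w = 0` at the origin, and for `w x = 1`: the section of `K` by the complex line through `0` and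
`x` is then the disk with diameter from `0` to `sectionDiam K x • x`. -/
noncomputable def sectionDiam (K : Set E) (x : E) : ℝ :=
  sSup {τ : ℝ | (τ : ℂ) • x ∈ K}

theorem sectionDiam_eq {R : ℝ} (hR : 0 ≤ R) {x : E}
    (h : ∀ z : ℂ, z • x ∈ K ↔ ‖z‖ ^ 2 ≤ R * z.re) : sectionDiam K x = R := by
  have : {τ : ℝ | (τ : ℂ) • x ∈ K} = Set.Icc 0 R := by
    ext τ
    rw [Set.mem_ofPred_eq, h, Complex.norm_real, Real.norm_eq_abs, sq_abs, Complex.ofReal_re,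
      Set.mem_Icc]
    constructor
    · intro hτ
      constructor <;> nlinarith
    · rintro ⟨h0, hτR⟩
      nlinarith
  rw [sectionDiam, this, csSup_Icc hR]

namespace TouchesAtZero

theorem exists_smul_mem_iff (hw : TouchesAtZero w K) (hK : HasDiskSections K) {x : E}
    (hx : w x = 1) : ∃ R, 0 ≤ R ∧ ∀ z : ℂ, z • x ∈ K ↔ ‖z‖ ^ 2 ≤ R * z.re := by
  have hx0 : x ≠ 0 := fun h ↦ by simp [h] at hx
  have hball := hK 0 x hx0
  simp only [zero_add] at hball
  have re_nonneg (z : ℂ) (hz : z • x ∈ K) : 0 ≤ z.re := by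
    rcases eq_or_ne (z • x) 0 with h | h
    · simp [(smul_eq_zero.1 h).resolve_right hx0]
    · simpa [hx] using (hw.re_pos _ hz h).le
  obtain ⟨R, hR, hmem⟩ := hball.exists_mem_iff_norm_sq_le_inner (by simpa using hw.zero_mem)
    one_ne_zero fun z hz ↦ by simpa using re_nonneg z hz
  exact ⟨R, hR, fun z ↦ by simpa using hmem z⟩

theorem sectionDiam_nonneg (hw : TouchesAtZero w K) (hK : HasDiskSections K) {x : E}
    (hx : w x = 1) : 0 ≤ sectionDiam K x := by
  obtain ⟨R, hR, hmem⟩ := hw.exists_smul_mem_iff hK hx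
  rwa [sectionDiam_eq hR hmem]

theorem smul_mem_iff (hw : TouchesAtZero w K) (hK : HasDiskSections K) {x : E} (hx : w x = 1)
    (z : ℂ) : z • x ∈ K ↔ ‖z‖ ^ 2 ≤ sectionDiam K x * z.re := by
  obtain ⟨R, hR, hmem⟩ := hw.exists_smul_mem_iff hK hx
  rw [sectionDiam_eq hR hmem, hmem]

theorem inv_smul_mem_iff (hw : TouchesAtZero w K) (hK : HasDiskSections K) {x : E} (hx : w x = 1)
    {z : ℂ} (hz : z ≠ 0) : z⁻¹ • x ∈ K ↔ 1 ≤ sectionDiam K x * z.re := by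
  have hz' : 0 < ‖z‖ ^ 2 := by positivity
  rw [hw.smul_mem_iff hK hx, norm_inv, inv_pow, Complex.inv_re, Complex.normSq_eq_norm_sq,
    mul_div_assoc', inv_le_iff_one_le_mul₀ hz', div_mul_cancel₀ _ hz'.ne']

theorem sectionDiam_pos_of_smul_mem (hw : TouchesAtZero w K) (hK : HasDiskSections K) {x : E}
    (hx : w x = 1) {z : ℂ} (hz : z ≠ 0) (hmem : z • x ∈ K) : 0 < sectionDiam K x := by
  refine (hw.sectionDiam_nonneg hK hx).lt_of_ne' fun h ↦ ?_
  rw [hw.smul_mem_iff hK hx, h, zero_mul] at hmem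
  exact hmem.not_gt (by positivity)

theorem isClosedBall_one_le_sectionDiam_mul_re (hw : TouchesAtZero w K) (hK : HasDiskSections K)
    {x β : E} (hx : w x = 1) (hβ : w β = 0) (hβ0 : β ≠ 0) {m : ℂ} (hm : m ≠ 0) (k : ℂ) :
    IsClosedBall {t : ℂ | 1 ≤ sectionDiam K (x + t • β) * (m * t + k).re} := by
  -- The points `(m * t + k)⁻¹ • (x + t • β)` run through a complex line with parameter
  -- `(m * t + k)⁻¹`.
  set D : Set ℂ := (fun s ↦ m⁻¹ • β + s • (x - (k / m) • β)) ⁻¹' K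
  have direction_ne_zero : x - (k / m) • β ≠ 0 := fun h ↦ by simpa [hx, hβ] using congrArg w h
  have zero_notMem : (0 : ℂ) ∉ D := fun h ↦ by
    have hmem : m⁻¹ • β ∈ K := by simpa [D] using h
    simpa [hβ] using hw.re_pos _ hmem (smul_ne_zero (inv_ne_zero hm) hβ0)
  convert ((hK _ _ direction_ne_zero).inv zero_notMem).preimage_mul_add hm k using 1
  ext t
  rw [Set.mem_ofPred_eq, Set.mem_preimage, Set.mem_inv]
  rcases eq_or_ne (m * t + k) 0 with h | h
  · rw [h, inv_zero, Complex.zero_re, mul_zero]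
    exact iff_of_false zero_lt_one.not_ge zero_notMem
  have point_eq : m⁻¹ • β + (m * t + k)⁻¹ • (x - (k / m) • β) = (m * t + k)⁻¹ • (x + t • β) := by
    have : m⁻¹ = (m * t + k)⁻¹ * (t + k / m) := by field_simp
    rw [this]
    module
  rw [← hw.inv_smul_mem_iff hK (by simp [hx, hβ]) h, ← point_eq]
  rfl

theorem exists_sectionDiam_le (hw : TouchesAtZero w K) (hK : HasDiskSections K)
    (hcomp : IsCompact K) {s : Submodule ℂ E} (hs : IsClosed (s : Set E)) {x : E} (hxs : x ∈ s)
    (hx : w x = 1) (hpos : 0 < sectionDiam K x) :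
    ∃ x₀ ∈ s, w x₀ = 1 ∧ ∀ y ∈ s, w y = 1 → sectionDiam K y ≤ sectionDiam K x₀ := by
  obtain ⟨q, ⟨hqK, hqs⟩, hq⟩ := (hcomp.inter_right hs).exists_isMaxOn
    ⟨0, hw.zero_mem, s.zero_mem⟩ (Complex.continuous_re.comp w.continuous).continuousOn
  have sectionDiam_le (y : E) (hys : y ∈ s) (hy : w y = 1) : sectionDiam K y ≤ (w q).re := by
    have hmem : (sectionDiam K y : ℂ) • y ∈ K ∩ s := by
      refine ⟨(hw.smul_mem_iff hK hy _).2 ?_, s.smul_mem _ hys⟩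
      rw [Complex.norm_real, Real.norm_eq_abs, sq_abs, Complex.ofReal_re, sq]
    simpa [hy] using hq hmem
  have re_pos : 0 < (w q).re := hpos.trans_le (sectionDiam_le x hxs hx)
  have hwq : w q ≠ 0 := fun h ↦ by simp [h] at re_pos
  have hx₀ : w ((w q)⁻¹ • q) = 1 := by simp [hwq]
  refine ⟨(w q)⁻¹ • q, s.smul_mem _ hqs, hx₀, fun y hys hy ↦ (sectionDiam_le y hys hy).trans ?_⟩
  have norm_sq_le : ‖w q‖ ^ 2 ≤ sectionDiam K ((w q)⁻¹ • q) * (w q).re := by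
    rwa [← hw.smul_mem_iff hK hx₀, smul_inv_smul₀ hwq]
  refine le_of_mul_le_mul_right (le_trans ?_ norm_sq_le) re_pos
  rw [← sq]
  exact pow_le_pow_left₀ re_pos.le (Complex.re_le_norm _) 2

theorem sectionDiam_line_of_forall_le (hw : TouchesAtZero w K) (hK : HasDiskSections K)
    {x β : E} (hx : w x = 1) (hβ : w β = 0) (hβ0 : β ≠ 0)
    (hmax : ∀ t : ℂ, sectionDiam K (x + t • β) ≤ sectionDiam K x)
    (hne : ∃ t : ℂ, t ≠ 0 ∧ 0 < sectionDiam K (x + t • β)) :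
    ∃ a, 0 < a ∧ ∀ t : ℂ, 0 < sectionDiam K (x + t • β) ∧
      (sectionDiam K (x + t • β))⁻¹ = a * ‖t‖ ^ 2 + (sectionDiam K x)⁻¹ := by
  set k := (sectionDiam K x)⁻¹ with hk
  have w_line (t : ℂ) : w (x + t • β) = 1 := by simp [hx, hβ]
  obtain ⟨t₁, ht₁, hρ₁⟩ := hne
  have hρ_pos : 0 < sectionDiam K x := hρ₁.trans_le (hmax t₁)
  have hρ_k : sectionDiam K x * k = 1 := mul_inv_cancel₀ hρ_pos.ne'
  set S : Set (ℂ × ℝ) := {z | 1 ≤ sectionDiam K (x + z.1 • β) * (k + z.2)}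
  have S_sections : ∀ m ≠ 0, IsClosedBall {t : ℂ | (t, (m * t).re) ∈ S} := fun m hm ↦ by
    simpa [S, add_comm] using
      hw.isClosedBall_one_le_sectionDiam_mul_re hK hx hβ hβ0 hm ((k : ℝ) : ℂ)
  have S_zero : ((0, 0) : ℂ × ℝ) ∈ S := by simp [S, hρ_k]
  have S_nonneg : ∀ z ∈ S, 0 ≤ z.2 := fun z hz ↦ by
    have hz_nonneg : 0 ≤ k + z.2 := by
      refine (pos_of_mul_pos_right (zero_lt_one.trans_le hz) ?_).le
      exact hw.sectionDiam_nonneg hK (w_line z.1)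
    have := le_trans hz (mul_le_mul_of_nonneg_right (hmax z.1) hz_nonneg)
    rw [mul_add, hρ_k, le_add_iff_nonneg_right] at this
    exact nonneg_of_mul_nonneg_right this hρ_pos
  have S_nontrivial : ∃ z ∈ S, z.1 ≠ 0 :=
    ⟨(t₁, (sectionDiam K (x + t₁ • β))⁻¹ - k), by simp [S, hρ₁.ne'], ht₁⟩
  obtain ⟨R, hR, hS⟩ := exists_mem_iff_norm_sq_le_mul S_sections S_zero S_nonneg S_nontrivial
  refine ⟨R⁻¹, inv_pos.2 hR, fun t ↦ ?_⟩
  rcases eq_or_ne t 0 with rfl | ht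
  · simpa [hk] using hρ_pos
  · exact pos_and_inv_eq_of_forall_one_le_mul_iff (hw.sectionDiam_nonneg hK (w_line t)) hR (hS t ht)

theorem exists_inv_sectionDiam_line (hw : TouchesAtZero w K) (hK : HasDiskSections K)
    (hcomp : IsCompact K) {x β : E} (hx : w x = 1) (hβ : w β = 0) (hβ0 : β ≠ 0)
    (hpos : {t : ℂ | 0 < sectionDiam K (x + t • β)}.Nontrivial) :
    ∃ (t₀ : ℂ) (a c : ℝ), 0 < a ∧ ∀ t : ℂ, 0 < sectionDiam K (x + t • β) ∧
      (sectionDiam K (x + t • β))⁻¹ = a * ‖t - t₀‖ ^ 2 + c := by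
  have line_mem (t : ℂ) : x + t • β ∈ Submodule.span ℂ {x, β} :=
    Submodule.mem_span_pair.2 ⟨1, t, by rw [one_smul]⟩
  have w_line (t : ℂ) : w (x + t • β) = 1 := by simp [hx, hβ]
  have finite_span := FiniteDimensional.span_of_finite ℂ (Set.toFinite {x, β})
  obtain ⟨t₁, ht₁⟩ := hpos.nonempty
  obtain ⟨x₀, hx₀, hwx₀, hmax⟩ := hw.exists_sectionDiam_le hK hcomp
    (Submodule.closed_of_finiteDimensional _) (line_mem t₁) (w_line t₁) ht₁
  obtain ⟨b, t₀, rfl⟩ := Submodule.mem_span_pair.1 hx₀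
  obtain rfl : b = 1 := by simpa [hx, hβ] using hwx₀
  rw [one_smul] at hmax hwx₀
  have reparam (t : ℂ) : x + t • β = x + t₀ • β + (t - t₀) • β := by module
  obtain ⟨t₂, ht₂, hne⟩ := hpos.exists_ne t₀
  obtain ⟨a, ha, hline⟩ := hw.sectionDiam_line_of_forall_le hK hwx₀ hβ hβ0
    (fun t ↦ by
      rw [add_assoc, ← add_smul]
      exact hmax _ (line_mem _) (w_line _))
    ⟨t₂ - t₀, sub_ne_zero.2 hne, reparam t₂ ▸ ht₂⟩
  exact ⟨t₀, a, _, ha, fun t ↦ reparam t ▸ hline (t - t₀)⟩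

theorem sectionDiam_pos (hw : TouchesAtZero w K) (hK : HasDiskSections K) (hcomp : IsCompact K)
    (hint : (interior K).Nonempty) {x : E} (hx : w x = 1) : 0 < sectionDiam K x := by
  have : Nontrivial E := ⟨x, 0, fun h ↦ by simp [h] at hx⟩
  obtain ⟨q, hq, hq0⟩ := (dense_compl_singleton (0 : E)).exists_mem_open isOpen_interior hint
  have hwq : w q ≠ 0 := fun h ↦ by simpa [h] using hw.re_pos q (interior_subset hq0) hq
  set x₁ := (w q)⁻¹ • q
  have hwx₁ : w x₁ = 1 := by simp [x₁, hwq]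
  have smul_line (t : ℂ) : w q • (x₁ + t • (x - x₁)) = q + t • w q • (x - x₁) := by
    rw [smul_add, smul_inv_smul₀ hwq, smul_comm]
  have w_line (t : ℂ) : w (x₁ + t • (x - x₁)) = 1 := by simp [hx, hwx₁]
  have pos_of_mem (t : ℂ) (ht : q + t • w q • (x - x₁) ∈ interior K) :
      0 < sectionDiam K (x₁ + t • (x - x₁)) :=
    hw.sectionDiam_pos_of_smul_mem hK (w_line t) hwq (smul_line t ▸ interior_subset ht)
  rcases eq_or_ne x x₁ with rfl | hne
  · simpa using pos_of_mem 0 (by simpa using hq0)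
  have mem_zero : q + (0 : ℂ) • w q • (x - x₁) ∈ interior K := by simpa using hq0
  obtain ⟨t, ht0, ht⟩ := (dense_compl_singleton (0 : ℂ)).exists_mem_open
    (isOpen_interior.preimage (f := fun t : ℂ ↦ q + t • w q • (x - x₁)) (by fun_prop)) ⟨0, mem_zero⟩
  obtain ⟨t₀, a, c, -, hline⟩ := hw.exists_inv_sectionDiam_line hK hcomp hwx₁
    (by rw [map_sub, hx, hwx₁, sub_self]) (sub_ne_zero.2 hne)
    ⟨0, pos_of_mem 0 mem_zero, t, pos_of_mem t ht, Ne.symm ht0⟩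
  simpa using (hline 1).1

theorem exists_inv_sectionDiam_eq_add_norm_sq [FiniteDimensional ℂ E] (hw : TouchesAtZero w K)
    (hK : HasDiskSections K) (hcomp : IsCompact K) (hint : (interior K).Nonempty) (hw0 : w ≠ 0) :
    ∃ (x₀ : E) (φ : w.ker ≃ₗ[ℂ] EuclideanSpace ℂ (Fin (Module.finrank ℂ w.ker))) (c : ℝ),
      w x₀ = 1 ∧ 0 < c ∧ ∀ v : w.ker,
        0 < sectionDiam K (x₀ + v) ∧ (sectionDiam K (x₀ + v))⁻¹ = c + ‖φ v‖ ^ 2 := by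
  obtain ⟨x, hx⟩ : ∃ x, w x = 1 := w.toLinearMap.surjective (by exact_mod_cast hw0) 1
  have pos {y : E} (hy : w y = 1) : 0 < sectionDiam K y := hw.sectionDiam_pos hK hcomp hint hy
  obtain ⟨x₀, -, hx₀, hmax⟩ := hw.exists_sectionDiam_le hK hcomp
    (s := ⊤) isClosed_univ (Submodule.mem_top (x := x)) hx (pos hx)
  have w_add (v : w.ker) : w (x₀ + v) = 1 := by
    rw [map_add, hx₀, show w v = 0 from LinearMap.mem_ker.1 v.2, add_zero]
  set q : w.ker → ℝ := fun v ↦ (sectionDiam K (x₀ + v))⁻¹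
  have hq : IsSqDistOnLines ℂ q := fun u v hv ↦ by
    have positive_on_line (t : ℂ) : 0 < sectionDiam K (x₀ + u + t • (v : E)) := by
      simpa [add_assoc] using pos (w_add (u + t • v))
    obtain ⟨t₀, a, c, ha, hline⟩ := hw.exists_inv_sectionDiam_line hK hcomp (w_add u)
      (LinearMap.mem_ker.1 v.2) (Submodule.coe_eq_zero.not.2 hv)
      ⟨0, positive_on_line 0, 1, positive_on_line 1, zero_ne_one⟩
    exact ⟨t₀, a, c, ha, fun t ↦ by simpa [q, add_assoc] using (hline t).2⟩
  have q_zero : q 0 = (sectionDiam K x₀)⁻¹ := by simp [q]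
  obtain ⟨φ, hφ⟩ := hq.exists_linearEquiv_eq_add_norm_sq fun v ↦
    q_zero ▸ inv_anti₀ (pos (w_add v)) (hmax _ Submodule.mem_top (w_add v))
  exact ⟨x₀, φ, q 0, hx₀, q_zero ▸ inv_pos.2 (pos hx₀), fun v ↦ ⟨pos (w_add v), hφ v⟩⟩

theorem smul_add_mem_iff {F : Type*} [NormedAddCommGroup F] [NormedSpace ℂ F]
    (hw : TouchesAtZero w K) (hK : HasDiskSections K) {x₀ : E} (hx₀ : w x₀ = 1)
    {φ : w.ker ≃ₗ[ℂ] F} {c : ℝ} (hdiam : ∀ v : w.ker,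
      0 < sectionDiam K (x₀ + v) ∧ (sectionDiam K (x₀ + v))⁻¹ = c + ‖φ v‖ ^ 2) (z : ℂ)
    (v : w.ker) : z • x₀ + v ∈ K ↔ c * ‖z‖ ^ 2 + ‖φ v‖ ^ 2 ≤ z.re := by
  have w_eq_zero (u : w.ker) : w u = 0 := LinearMap.mem_ker.1 u.2
  rcases eq_or_ne z 0 with rfl | hz
  · have mem_iff : (v : E) ∈ K ↔ v = 0 := by
      refine ⟨fun hv ↦ by_contra fun hv0 ↦ ?_, fun hv ↦ hv ▸ hw.zero_mem⟩
      simpa [w_eq_zero] using hw.re_pos v hv (Submodule.coe_eq_zero.not.2 hv0)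
    simp [mem_iff, (sq_nonneg ‖φ v‖).ge_iff_eq']
  obtain ⟨hpos, hinv⟩ := hdiam (z⁻¹ • v)
  have hz' : ‖z‖ ≠ 0 := norm_ne_zero_iff.2 hz
  have w_add : w (x₀ + (z⁻¹ • v : w.ker)) = 1 := by rw [map_add, hx₀, w_eq_zero, add_zero]
  have smul_eq : z • x₀ + v = z • (x₀ + (z⁻¹ • v : w.ker)) := by
    rw [Submodule.coe_smul, smul_add, smul_inv_smul₀ hz]
  have inv_mul_eq : (sectionDiam K (x₀ + (z⁻¹ • v : w.ker)))⁻¹ * ‖z‖ ^ 2 =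
      c * ‖z‖ ^ 2 + ‖φ v‖ ^ 2 := by
    rw [hinv, map_smul, norm_smul, norm_inv]
    field_simp
  rw [smul_eq, hw.smul_mem_iff hK w_add, ← inv_mul_le_iff₀ hpos, inv_mul_eq]

theorem exists_mem_iff_norm_sq_add_le_re [FiniteDimensional ℂ E] (hw : TouchesAtZero w K)
    (hK : HasDiskSections K) (hcomp : IsCompact K) (hint : (interior K).Nonempty) (hw0 : w ≠ 0) :
    ∃ (φ : E ≃ₗ[ℂ] ℂ × EuclideanSpace ℂ (Fin (Module.finrank ℂ w.ker))) (c : ℝ), 0 < c ∧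
      ∀ x, x ∈ K ↔ c * ‖(φ x).1‖ ^ 2 + ‖(φ x).2‖ ^ 2 ≤ (φ x).1.re := by
  obtain ⟨x₀, φ, c, hx₀, hc, hdiam⟩ :=
    hw.exists_inv_sectionDiam_eq_add_norm_sq hK hcomp hint hw0
  set e := ContinuousLinearEquiv.equivOfRightInverse w (.toSpanSingleton ℂ x₀)
    fun z ↦ by simp [hx₀]
  refine ⟨e.toLinearEquiv ≪≫ₗ (LinearEquiv.refl ℂ ℂ).prodCongr φ, c, hc, fun x ↦ ?_⟩
  obtain ⟨⟨z, v⟩, rfl⟩ := e.symm.surjective x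
  have e_symm : e.symm (z, v) = z • x₀ + v :=
    ContinuousLinearEquiv.equivOfRightInverse_symm_apply ..
  rw [LinearEquiv.trans_apply, ContinuousLinearEquiv.coe_toLinearEquiv, e.apply_symm_apply, e_symm]
  exact hw.smul_add_mem_iff hK hx₀ hdiam z v

end TouchesAtZero

theorem sq_mul_norm_sq_add_norm_sq_le_re_iff {F : Type*} [NormedAddCommGroup F] {s r : ℝ}
    (hr : 0 ≤ r) (hsr : 2 * (s * r) = 1) (z : ℂ) (y : F) :
    s ^ 2 * ‖z‖ ^ 2 + ‖y‖ ^ 2 ≤ z.re ↔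
      WithLp.toLp 2 ((s : ℂ) • z, y) ∈ Metric.closedBall (WithLp.toLp 2 ((r : ℂ), (0 : F))) r := by
  have inner_eq : 2 * inner ℝ ((s : ℂ) • z) (r : ℂ) = z.re := by
    rw [real_inner_comm, Complex.inner, Complex.conj_ofReal, smul_eq_mul, mul_right_comm,
      ← Complex.ofReal_mul, Complex.re_ofReal_mul, ← mul_assoc, hsr, one_mul]
  have completed_square : ‖(s : ℂ) • z - r‖ ^ 2 = s ^ 2 * ‖z‖ ^ 2 - z.re + r ^ 2 := by
    rw [norm_sub_sq_real, inner_eq, norm_smul, mul_pow, Complex.norm_real, Complex.norm_real,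
      Real.norm_eq_abs, Real.norm_eq_abs, sq_abs, sq_abs]
  rw [mem_closedBall_iff_norm, ← sq_le_sq₀ (norm_nonneg _) hr, ← WithLp.toLp_sub, Prod.mk_sub_mk,
    WithLp.prod_norm_sq_eq_of_L2, WithLp.toLp_fst, WithLp.toLp_snd, completed_square, sub_zero]
  constructor <;> intro h <;> linarith

theorem TouchesAtZero.exists_eq_preimage_closedBall [FiniteDimensional ℂ E]
    (hw : TouchesAtZero w K) (hK : HasDiskSections K) (hcomp : IsCompact K)
    (hint : (interior K).Nonempty) (hw0 : w ≠ 0) :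
    ∃ (φ : E ≃ₗ[ℂ] WithLp 2 (ℂ × EuclideanSpace ℂ (Fin (Module.finrank ℂ w.ker))))
      (b : WithLp 2 (ℂ × EuclideanSpace ℂ (Fin (Module.finrank ℂ w.ker)))) (r : ℝ),
      0 < r ∧ K = φ ⁻¹' Metric.closedBall b r := by
  obtain ⟨φ, c, hc, hmem⟩ := hw.exists_mem_iff_norm_sq_add_le_re hK hcomp hint hw0
  have hs : 0 < √c := Real.sqrt_pos.2 hc
  refine ⟨φ ≪≫ₗ (LinearEquiv.smulOfNeZero ℂ ℂ _ (Complex.ofReal_ne_zero.2 hs.ne')).prodCongr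
    (LinearEquiv.refl ℂ _) ≪≫ₗ (WithLp.linearEquiv 2 ℂ _).symm,
    WithLp.toLp 2 (((2 * √c)⁻¹ : ℝ), 0), (2 * √c)⁻¹, by positivity, Set.ext fun x ↦ ?_⟩
  have := sq_mul_norm_sq_add_norm_sq_le_re_iff (s := √c) (r := (2 * √c)⁻¹) (by positivity)
    (by field_simp) (φ x).1 (φ x).2
  rw [hmem]
  rwa [Real.sq_sqrt hc.le] at this

end SectionDiam

section Ellipsoid

open Metric

theorem exists_touchesAtZero_preimage_add {E : Type*} [NormedAddCommGroup E]
    [InnerProductSpace ℂ E] {K : Set E} (hcomp : IsCompact K) (hne : K.Nonempty) :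
    ∃ (p : E) (w : E →L[ℂ] ℂ), TouchesAtZero w ((p + ·) ⁻¹' K) := by
  obtain ⟨p, hp, hmax⟩ := hcomp.exists_isMaxOn hne continuous_norm.continuousOn
  refine ⟨p, -innerSL ℂ p, by simpa using hp, fun y hy hy0 ↦ ?_⟩
  have norm_le : ‖p + y‖ ^ 2 ≤ ‖p‖ ^ 2 := by
    gcongr
    exact hmax hy
  rw [norm_add_sq (𝕜 := ℂ), RCLike.re_eq_complex_re] at norm_le
  rw [neg_apply, innerSL_apply_apply, Complex.neg_re]
  linarith [pow_pos (norm_pos_iff.2 hy0) 2]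

theorem TouchesAtZero.ne_zero {E : Type*} [NormedAddCommGroup E] [NormedSpace ℂ E] [Nontrivial E]
    {K : Set E} {w : E →L[ℂ] ℂ} (hw : TouchesAtZero w K) (hint : (interior K).Nonempty) :
    w ≠ 0 := by
  obtain ⟨y, hy, hyK⟩ := (dense_compl_singleton (0 : E)).exists_mem_open isOpen_interior hint
  rintro rfl
  exact (hw.re_pos y (interior_subset hyK) hy).false

variable {n : ℕ} {K : Set (EuclideanSpace ℂ (Fin n))}

theorem isComplexEllipsoid_preimage_closedBall {F : Type*} [NormedAddCommGroup F]
    [InnerProductSpace ℂ F] (φ : EuclideanSpace ℂ (Fin n) ≃ₗ[ℂ] F) (b : F) {r : ℝ} (hr : 0 < r) :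
    IsComplexEllipsoid (φ ⁻¹' closedBall b r) := by
  have : FiniteDimensional ℂ F := φ.finiteDimensional
  let e : F ≃ₗᵢ[ℂ] EuclideanSpace ℂ (Fin n) :=
    ((stdOrthonormalBasis ℂ F).reindex (finCongr (by simp [← φ.finrank_eq]))).repr
  refine ⟨e.symm.toLinearEquiv ≪≫ₗ
    .smulOfNeZero ℂ F (r : ℂ) (Complex.ofReal_ne_zero.2 hr.ne') ≪≫ₗ φ.symm, φ.symm b, ?_⟩
  have ball_eq : closedBall b r = (fun x ↦ (r : ℂ) • e.symm x + b) '' closedBall 0 1 := by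
    rw [← affinity_unitClosedBall hr.le, ← map_zero e.symm, ← e.symm.image_closedBall,
      ← Set.image_smul, ← Set.image_vadd, Set.image_image, Set.image_image]
    simp only [vadd_eq_add, add_comm, Complex.coe_smul]
  rw [ball_eq, ← LinearEquiv.image_symm_eq_preimage, Set.image_image]
  simp only [map_add]
  rfl

theorem IsComplexEllipsoid.hasDiskSections (hK : IsComplexEllipsoid K) : HasDiskSections K := by
  obtain ⟨L, b, rfl⟩ := hK
  let f : EuclideanSpace ℂ (Fin n) ≃ᵃ[ℂ] EuclideanSpace ℂ (Fin n) :=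
    L.toAffineEquiv.trans (AffineEquiv.vaddConst ℂ b)
  have image_eq : (fun x ↦ L x + b) '' closedBall 0 1 = f.symm.toAffineMap ⁻¹' closedBall 0 1 :=
    f.toEquiv.image_eq_preimage_symm _
  rw [image_eq]
  exact (hasDiskSections_closedBall 0 1).preimage _ f.symm.injective

theorem HasDiskSections.isComplexEllipsoid (hK : HasDiskSections K)
    (hint : (interior K).Nonempty) : IsComplexEllipsoid K := by
  cases subsingleton_or_nontrivial (EuclideanSpace ℂ (Fin n))
  · rw [Subsingleton.eq_univ_of_nonempty (hint.mono interior_subset)]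
    exact ⟨.refl ℂ _, 0, .symm (Set.eq_univ_of_forall fun x ↦ ⟨x, by simp [Subsingleton.elim x 0]⟩)⟩
  obtain ⟨p, w, hw⟩ :=
    exists_touchesAtZero_preimage_add (hK.isCompact hint) (hint.mono interior_subset)
  have translate_interior : (interior ((p + ·) ⁻¹' K)).Nonempty := by
    rw [← Homeomorph.coe_addLeft, ← Homeomorph.preimage_interior]
    exact hint.preimage (Homeomorph.surjective _)
  have translate_sections : HasDiskSections ((p + ·) ⁻¹' K) :=
    hK.preimage (AffineEquiv.constVAdd ℂ _ p).toAffineMap (add_right_injective p)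
  obtain ⟨φ, b, r, hr, hφ⟩ := hw.exists_eq_preimage_closedBall translate_sections
    (translate_sections.isCompact translate_interior) translate_interior
    (hw.ne_zero translate_interior)
  suffices K = φ ⁻¹' closedBall (φ p + b) r from
    this ▸ isComplexEllipsoid_preimage_closedBall φ _ hr
  ext x
  obtain ⟨y, rfl⟩ := add_left_surjective p x
  rw [Set.mem_preimage, map_add, mem_closedBall, dist_add_left]
  exact Set.ext_iff.1 hφ y

end Ellipsoid

theorem stmt16_general {n : ℕ} {K : Set (EuclideanSpace ℂ (Fin n))}
    (hK : (interior K).Nonempty) :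
    IsComplexEllipsoid K ↔
      ∀ p v : EuclideanSpace ℂ (Fin n), v ≠ 0 →
        {x | ∃ z : ℂ, x = p + z • v} ∩ K = ∅ ∨
        (∃ x : EuclideanSpace ℂ (Fin n),
          {x' | ∃ z : ℂ, x' = p + z • v} ∩ K = {x}) ∨
        (∃ (c : EuclideanSpace ℂ (Fin n)) (r : ℝ), 0 < r ∧ (∃ z : ℂ, c = p + z • v) ∧
          {x | ∃ z : ℂ, x = p + z • v} ∩ K
            = {x | ∃ z : ℂ, ‖z‖ ≤ r ∧ x = c + z • v}) :=
  calc IsComplexEllipsoid K ↔ HasDiskSections K :=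
        ⟨IsComplexEllipsoid.hasDiskSections, fun h ↦ h.isComplexEllipsoid hK⟩
    _ ↔ _ := forall₂_congr fun _ _ ↦ forall_congr' isClosedBall_preimage_line_iff

theorem stmt16 {n : ℕ} (hn : 2 ≤ n)
    (K : Set (EuclideanSpace ℂ (Fin n))) (hK : IsConvexBody K) :
    IsComplexEllipsoid K ↔
      ∀ p v : EuclideanSpace ℂ (Fin n), v ≠ 0 →
        {x | ∃ z : ℂ, x = p + z • v} ∩ K = ∅ ∨
        (∃ x : EuclideanSpace ℂ (Fin n),
          {x' | ∃ z : ℂ, x' = p + z • v} ∩ K = {x}) ∨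
        (∃ (c : EuclideanSpace ℂ (Fin n)) (r : ℝ), 0 < r ∧ (∃ z : ℂ, c = p + z • v) ∧
          {x | ∃ z : ℂ, x = p + z • v} ∩ K
            = {x | ∃ z : ℂ, ‖z‖ ≤ r ∧ x = c + z • v}) :=
  stmt16_general hK.2.2
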